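/- Let μ be the evolution algebra structure on ℂ² relative to the basis e₁, e₂ given by μ(e₁,e₁) = e₁ and μ(e₂,e₂) = e₁ (the algebra 𝓔₂). Then a 2-cocycle θ ∈ Z²(ℂ²) is a 2-coboundary for μ if and only if the e₂-coordinate of θ(e₁,e₁) equals the e₂-coordinate of θ(e₂,e₂); that is, B²(μ) = span{(−1 0; 1 0), (0 1; 0 1), (0 0; −2 0)} as structure matrices, a 3-dimensional subspace of Z²(ℂ²). -/

import Mathlib

/-!
In a natural basis `b`, the terms `μ (b i) (φ (b j))` and `μ (φ (b i)) (b j)` of `δ_μ φ` see only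
the entries `(i, j)` and `(j, i)` of the matrix of `φ`. For `𝓔₂` and `φ = (x y; z w)` this gives
`δ_μ φ (e₁, e₁) = -x e₁ + z e₂`, `δ_μ φ (e₂, e₂) = (x - 2 w) e₁ + z e₂` and
`δ_μ φ (e₁, e₂) = -(y + z) e₁`. So the `e₂`-coordinates of the diagonal values agree; conversely
`x`, `z`, `w` can be read off the diagonal values once `2` divides the sum of their
`e₁`-coordinates, and `y = -z`.
-/

namespace EvolutionAlgebra

open Module

variable {R M ι : Type*} [CommRing R] [AddCommGroup M] [Module R M]

/-- The coboundary `δ_μ φ` of an endomorphism `φ`, as a bilinear map. It measures the failure of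
`φ` to be a derivation of the (not necessarily associative) product `μ`. -/
def coboundary (μ : M →ₗ[R] M →ₗ[R] M) (φ : M →ₗ[R] M) : M →ₗ[R] M →ₗ[R] M :=
  μ.compr₂ φ - μ.compl₂ φ - μ ∘ₗ φ

theorem coboundary_apply (μ : M →ₗ[R] M →ₗ[R] M) (φ : M →ₗ[R] M) (u v : M) :
    coboundary μ φ u v = φ (μ u v) - μ u (φ v) - μ (φ u) v :=
  rfl

/-- `b` is a natural basis for the bilinear map `m`: products of distinct basis vectors vanish.
This expresses both that `m` is an evolution algebra structure relative to `b` and that `m` is a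
2-cocycle. -/
def IsNaturalBasis (b : Basis ι R M) (m : M →ₗ[R] M →ₗ[R] M) : Prop :=
  ∀ i j, i ≠ j → m (b i) (b j) = 0

variable {b : Basis ι R M} {μ θ : M →ₗ[R] M →ₗ[R] M}

namespace IsNaturalBasis

theorem flip (hμ : IsNaturalBasis b μ) : IsNaturalBasis b μ.flip :=
  fun i j hij => hμ j i hij.symm

theorem apply_basis_left (hμ : IsNaturalBasis b μ) (i : ι) (v : M) :
    μ (b i) v = b.repr v i • μ (b i) (b i) := by
  classical
  suffices h : μ (b i) = (b.coord i).smulRight (μ (b i) (b i)) from LinearMap.congr_fun h v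
  refine b.ext fun j => ?_
  obtain rfl | hij := eq_or_ne i j
  · simp
  · simp [hμ i j hij, hij]

theorem apply_basis_right (hμ : IsNaturalBasis b μ) (u : M) (j : ι) :
    μ u (b j) = b.repr u j • μ (b j) (b j) :=
  hμ.flip.apply_basis_left j u

theorem coboundary_basis (hμ : IsNaturalBasis b μ) (φ : M →ₗ[R] M) (i j : ι) :
    coboundary μ φ (b i) (b j) =
      φ (μ (b i) (b j)) - b.repr (φ (b j)) i • μ (b i) (b i)
        - b.repr (φ (b i)) j • μ (b j) (b j) := by
  rw [coboundary_apply, hμ.apply_basis_left i (φ (b j)), hμ.apply_basis_right (φ (b i)) j]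

theorem eq_coboundary_iff (hμ : IsNaturalBasis b μ) (hθ : IsNaturalBasis b θ) (φ : M →ₗ[R] M) :
    θ = coboundary μ φ ↔
      (∀ i, θ (b i) (b i) = φ (μ (b i) (b i)) - (2 * b.repr (φ (b i)) i) • μ (b i) (b i)) ∧
      ∀ i j, i ≠ j →
        b.repr (φ (b j)) i • μ (b i) (b i) + b.repr (φ (b i)) j • μ (b j) (b j) = 0 := by
  have diagonal (i : ι) : coboundary μ φ (b i) (b i) =
      φ (μ (b i) (b i)) - (2 * b.repr (φ (b i)) i) • μ (b i) (b i) := by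
    rw [hμ.coboundary_basis, two_mul, add_smul, sub_sub]
  have off_diagonal {i j : ι} (hij : i ≠ j) : coboundary μ φ (b i) (b j) =
      -(b.repr (φ (b j)) i • μ (b i) (b i) + b.repr (φ (b i)) j • μ (b j) (b j)) := by
    rw [hμ.coboundary_basis, hμ i j hij, map_zero, zero_sub, neg_add']
  constructor
  · rintro rfl
    exact ⟨diagonal, fun i j hij => neg_eq_zero.mp ((off_diagonal hij).symm.trans (hθ i j hij))⟩
  · rintro ⟨hdiag, hoff⟩
    refine LinearMap.ext_basis b b fun i j => ?_
    obtain rfl | hij := eq_or_ne i j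
    · rw [hdiag, diagonal]
    · rw [hθ i j hij, off_diagonal hij, hoff i j hij, neg_zero]

end IsNaturalBasis

theorem eq_coboundary_iff_of_E₂ {b : Basis (Fin 2) R M} (hμ : IsNaturalBasis b μ)
    (hμ0 : μ (b 0) (b 0) = b 0) (hμ1 : μ (b 1) (b 1) = b 0)
    (hθ : IsNaturalBasis b θ) (φ : M →ₗ[R] M) :
    θ = coboundary μ φ ↔
      (b.repr (θ (b 0) (b 0)) 0 = -b.repr (φ (b 0)) 0 ∧
        b.repr (θ (b 0) (b 0)) 1 = b.repr (φ (b 0)) 1) ∧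
      (b.repr (θ (b 1) (b 1)) 0 = b.repr (φ (b 0)) 0 - 2 * b.repr (φ (b 1)) 1 ∧
        b.repr (θ (b 1) (b 1)) 1 = b.repr (φ (b 0)) 1) ∧
      b.repr (φ (b 1)) 0 = -b.repr (φ (b 0)) 1 := by
  have off_diagonal_iff : (∀ i j, i ≠ j →
      b.repr (φ (b j)) i • μ (b i) (b i) + b.repr (φ (b i)) j • μ (b j) (b j) = 0) ↔
      b.repr (φ (b 1)) 0 = -b.repr (φ (b 0)) 1 := by
    simp [Fin.forall_fin_two, hμ0, hμ1, b.ext_elem_iff, eq_neg_iff_add_eq_zero, add_comm]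
  rw [hμ.eq_coboundary_iff hθ, off_diagonal_iff]
  have sub_two_mul_self (x : R) : x - 2 * x = -x := by ring
  simp [Fin.forall_fin_two, hμ0, hμ1, b.ext_elem_iff, sub_two_mul_self, and_assoc]

end EvolutionAlgebra

open EvolutionAlgebra

theorem stmt8_general {R M : Type*} [CommRing R] [AddCommGroup M] [Module R M]
    {b : Module.Basis (Fin 2) R M} {μ θ : M →ₗ[R] M →ₗ[R] M} (hμ : IsNaturalBasis b μ)
    (hμ0 : μ (b 0) (b 0) = b 0) (hμ1 : μ (b 1) (b 1) = b 0) (hθ : IsNaturalBasis b θ) :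
    (∃ φ, θ = coboundary μ φ) ↔
      b.repr (θ (b 0) (b 0)) 1 = b.repr (θ (b 1) (b 1)) 1 ∧
      2 ∣ b.repr (θ (b 0) (b 0)) 0 + b.repr (θ (b 1) (b 1)) 0 := by
  simp only [eq_coboundary_iff_of_E₂ hμ hμ0 hμ1 hθ]
  constructor
  · rintro ⟨φ, ⟨h00, h01⟩, ⟨h10, h11⟩, -⟩
    exact ⟨h01.trans h11.symm, -b.repr (φ (b 1)) 1, by rw [h00, h10]; ring⟩
  · rintro ⟨h1, k, hk⟩
    let s := b.repr (θ (b 0) (b 0))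
    refine ⟨Matrix.toLin b b !![-s 0, -s 1; s 1, -k], ?_⟩
    simp [s, Matrix.toLin_self, ← h1, ← hk]

/-- For the evolution algebra `𝓔₂` on `ℂ²` with `e₁² = e₂² = e₁`,
a 2-cocycle `θ` is a 2-coboundary if and only if the `e₂`-coordinate of `θ(e₁,e₁)`
equals the `e₂`-coordinate of `θ(e₂,e₂)`. -/
theorem stmt8 (e : Fin 2 → (Fin 2 → ℂ)) (he : ∀ i, e i = Pi.single i 1)
    (μ θ : (Fin 2 → ℂ) →ₗ[ℂ] (Fin 2 → ℂ) →ₗ[ℂ] (Fin 2 → ℂ))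
    (hμz : ∀ i j : Fin 2, i ≠ j → μ (e i) (e j) = 0)
    (hμ0 : μ (e 0) (e 0) = e 0) (hμ1 : μ (e 1) (e 1) = e 0)
    (hθz : ∀ i j : Fin 2, i ≠ j → θ (e i) (e j) = 0) :
    (∃ φ : (Fin 2 → ℂ) →ₗ[ℂ] (Fin 2 → ℂ),
        ∀ u v : Fin 2 → ℂ, θ u v = φ (μ u v) - μ u (φ v) - μ (φ u) v) ↔
    θ (e 0) (e 0) 1 = θ (e 1) (e 1) 1 := by
  obtain rfl : e = Pi.basisFun ℂ (Fin 2) := funext fun i => by simp [he]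
  simpa [LinearMap.ext_iff₂, coboundary_apply, (IsUnit.mk0 (2 : ℂ) two_ne_zero).dvd] using
    stmt8_general hμz hμ0 hμ1 hθz
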